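/- Let n ≥ 1 and let μ be a Borel probability measure on ℝ^{n×n} with bounded support. For a positive integer m, let μ^{⊗m} denote the pushforward of μ under the map A ↦ A^{⊗m} (the m-th Kronecker power). Then for all positive integers p and m, ρ_{p, μ^{⊗m}} = (ρ_{mp, μ})^m. -/

import Mathlib

open MeasureTheory Filter Topology
open scoped ENNReal RealInnerProductSpace

noncomputable section

/-- The space of real `n × n` matrices. -/
abbrev Mat (n : ℕ) := Matrix (Fin n) (Fin n) ℝ

/-- Euclidean space `ℝⁿ`. -/
abbrev EucSp (n : ℕ) := EuclideanSpace ℝ (Fin n)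

/-- The (Borel = product) measurable structure on `n × n` real matrices. -/
instance matMeasurableSpace (n : ℕ) : MeasurableSpace (Mat n) :=
  inferInstanceAs (MeasurableSpace (Fin n → Fin n → ℝ))

/-- Lebesgue measure on the space of `n × n` real matrices `≅ ℝ^{n²}`. -/
def matLebesgue (n : ℕ) : Measure (Mat n) :=
  (inferInstance : MeasureSpace (Fin n → Fin n → ℝ)).volume

/-- The operator norm (maximal singular value) of a real square matrix, induced by the
Euclidean norm. -/
def opNorm {m : ℕ} (A : Matrix (Fin m) (Fin m) ℝ) : ℝ :=
  ‖LinearMap.toContinuousLinearMap (Matrix.toEuclideanLin A)‖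

/-- The product `A_k ⋯ A_1` of the matrices `f 0 = A_1, …, f (k-1) = A_k` (decreasing order of
indices). -/
def prodRev {m k : ℕ} (f : Fin k → Matrix (Fin m) (Fin m) ℝ) : Matrix (Fin m) (Fin m) ℝ :=
  ((List.ofFn f).reverse).prod

/-- The joint spectral radius of a set of matrices:
`ρ̂(M) = limsup_{k→∞} sup_{A₁,…,A_k ∈ M} ‖A_k ⋯ A₁‖^(1/k)`. -/
def jsr {m : ℕ} (M : Set (Matrix (Fin m) (Fin m) ℝ)) : ℝ :=
  limsup (fun k : ℕ =>
    sSup {x : ℝ | ∃ f : Fin k → Matrix (Fin m) (Fin m) ℝ,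
      (∀ i, f i ∈ M) ∧ x = opNorm (prodRev f)} ^ ((1 : ℝ) / k)) atTop

/-- `E[‖A_k ⋯ A₁‖^p]` where `A₁, …, A_k` are i.i.d. with law `μ`. -/
def kExpNorm {m : ℕ} (μ : Measure (Mat m)) (p k : ℕ) : ℝ :=
  ∫ f : Fin k → Mat m, opNorm (prodRev f) ^ p ∂(Measure.pi fun _ => μ)

/-- The `L^p`-norm joint spectral radius (`p`-radius) of a probability distribution `μ`:
`ρ_{p,μ} = lim_{k→∞} (E[‖A_k ⋯ A₁‖^p])^{1/(pk)}`; since this limit exists for distributions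
with bounded support, it coincides with the `limsup` used here. -/
def pRadius {m : ℕ} (μ : Measure (Mat m)) (p : ℕ) : ℝ :=
  limsup (fun k : ℕ => kExpNorm μ p k ^ (1 / (p * k : ℝ))) atTop

/-- The (topological) support of a measure on matrices. -/
def msupport {m : ℕ} (μ : Measure (Mat m)) : Set (Mat m) :=
  {A | ∀ ε : ℝ, 0 < ε → μ {B | opNorm (B - A) < ε} ≠ 0}

/-- `μ` has bounded support. -/
def HasBoundedSupport {m : ℕ} (μ : Measure (Mat m)) : Prop :=
  ∃ C : ℝ, ∀ A ∈ msupport μ, opNorm A ≤ C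

/-- A proper cone of `ℝⁿ`: a closed convex pointed cone with nonempty interior. -/
structure IsProperCone {m : ℕ} (K : Set (EucSp m)) : Prop where
  isClosed : IsClosed K
  convex : Convex ℝ K
  smul_mem : ∀ c : ℝ, 0 ≤ c → ∀ x ∈ K, c • x ∈ K
  pointed : ∀ x ∈ K, -x ∈ K → x = 0
  solid : (interior K).Nonempty

/-- A matrix `A` leaves a cone `K` invariant: `A K ⊆ K`. -/
def LeavesInv {m : ℕ} (A : Matrix (Fin m) (Fin m) ℝ) (K : Set (EucSp m)) : Prop :=
  ∀ x ∈ K, Matrix.toEuclideanLin A x ∈ K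

/-- A set of matrices leaves a cone invariant if each of its members does. -/
def SetLeavesInv {m : ℕ} (S : Set (Matrix (Fin m) (Fin m) ℝ)) (K : Set (EucSp m)) : Prop :=
  ∀ A ∈ S, LeavesInv A K

/-- `π(K)`: the set of matrices leaving the cone `K` invariant. -/
def piCone {m : ℕ} (K : Set (EucSp m)) : Set (Mat m) := {A | LeavesInv A K}

/-- Distance (valued in `ℝ≥0∞`, with `d(A, ∅) = ∞`) from a matrix to a set of matrices, in the
operator norm. -/
def edistSet {m : ℕ} (A : Mat m) (S : Set (Mat m)) : ℝ≥0∞ :=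
  ⨅ B ∈ S, ENNReal.ofReal (opNorm (A - B))

/-- Hausdorff distance between two sets of matrices (operator norm, valued in `ℝ≥0∞`). -/
def hausdorffDistE {m : ℕ} (S T : Set (Mat m)) : ℝ≥0∞ :=
  max (⨆ A ∈ S, edistSet A T) (⨆ B ∈ T, edistSet B S)

/-- `S_M = {A : A − M leaves K invariant}`, i.e. `{A : A ≥^K M}`. -/
def matSSet {m : ℕ} (K : Set (EucSp m)) (M : Mat m) : Set (Mat m) :=
  {A | LeavesInv (A - M) K}

/-- `π_r = {M ∈ π(K) : d(M, ∂π(K)) ≥ r}`. -/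
def piConeR {m : ℕ} (K : Set (EucSp m)) (r : ℝ) : Set (Mat m) :=
  {M | M ∈ piCone K ∧ ENNReal.ofReal r ≤ edistSet M (frontier (piCone K))}

/-- `M_r = (π_r ∩ supp μ_c) ∪ supp μ_s`. -/
def MrSet {m : ℕ} (K : Set (EucSp m)) (μc μs : Measure (Mat m)) (r : ℝ) : Set (Mat m) :=
  (piConeR K r ∩ msupport μc) ∪ msupport μs

/-- The measure `ν` is zero or a finite linear combination (with positive coefficients) of
Dirac measures. -/
def IsFiniteDiracComb {m : ℕ} (ν : Measure (Mat m)) : Prop :=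
  ν = 0 ∨ ∃ (N : ℕ) (w : Fin N → ℝ) (Ms : Fin N → Mat m),
    (∀ i, 0 < w i) ∧ ν = ∑ i, ENNReal.ofReal (w i) • Measure.dirac (Ms i)

/-- The `p`-th Kronecker power of a square matrix (with `A^{⊗0} = 1`, `A^{⊗(p+1)} = A^{⊗p} ⊗ A`). -/
def kronPow {m : ℕ} (A : Matrix (Fin m) (Fin m) ℝ) :
    (p : ℕ) → Matrix (Fin (m ^ p)) (Fin (m ^ p)) ℝ
  | 0 => 1
  | p + 1 =>
    Matrix.reindex (finProdFinEquiv.trans (finCongr (pow_succ m p).symm))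
      (finProdFinEquiv.trans (finCongr (pow_succ m p).symm))
      (Matrix.kroneckerMap (· * ·) (kronPow A p) A)

/-- The `q`-th Kronecker power of a vector. -/
def vecKronPow {m : ℕ} (x : EucSp m) : (q : ℕ) → EucSp (m ^ q)
  | 0 => WithLp.toLp 2 fun _ => 1
  | q + 1 => WithLp.toLp 2 fun i =>
      vecKronPow x q (finProdFinEquiv.symm (finCongr (pow_succ m q) i)).1 *
        x (finProdFinEquiv.symm (finCongr (pow_succ m q) i)).2

/-- The spectral radius of a real square matrix: the largest modulus of a complex eigenvalue. -/
def specRad {m : ℕ} (A : Matrix (Fin m) (Fin m) ℝ) : ℝ :=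
  sSup ((fun z : ℂ => ‖z‖) '' spectrum ℂ (A.map Complex.ofReal))

/-- The entrywise expectation `E[A^{⊗p}]` of the `p`-th Kronecker power under `μ`. -/
def kronExp {m : ℕ} (μ : Measure (Mat m)) (p : ℕ) :
    Matrix (Fin (m ^ p)) (Fin (m ^ p)) ℝ :=
  Matrix.of fun i j => ∫ A, kronPow A p i j ∂μ

/-- `V` is a stochastic Lyapunov function for `μ` of degree `p` with growth rate `γ`. -/
def IsStochLyap {m : ℕ} (μ : Measure (Mat m)) (p : ℕ) (γ : ℝ) (V : EucSp m → ℝ) : Prop :=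
  (∃ C₁ : ℝ, 0 < C₁ ∧ ∃ C₂ : ℝ, 0 < C₂ ∧
    ∀ x : EucSp m, C₁ * ‖x‖ ^ p ≤ V x ∧ V x ≤ C₂ * ‖x‖ ^ p) ∧
  ∀ x : EucSp m, (∫ A, V (Matrix.toEuclideanLin A x) ∂μ) ≤ γ ^ p * V x

/-- `ν` is a norm on `ℝ^m`. -/
def IsNormFn {m : ℕ} (ν : EucSp m → ℝ) : Prop :=
  (∀ x, 0 ≤ ν x) ∧ (∀ x, ν x = 0 ↔ x = 0) ∧
  (∀ (a : ℝ) (x : EucSp m), ν (a • x) = |a| * ν x) ∧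
  (∀ x y : EucSp m, ν (x + y) ≤ ν x + ν y)

/-- `ν` is cone absolute with respect to `K`:
`ν x = inf {ν (v + w) : v, w ∈ K, x = v − w}`. -/
def IsConeAbsolute {m : ℕ} (K : Set (EucSp m)) (ν : EucSp m → ℝ) : Prop :=
  ∀ x : EucSp m, ν x = sInf {r : ℝ | ∃ v ∈ K, ∃ w ∈ K, x = v - w ∧ r = ν (v + w)}

/-- The dual cone `K* = {f : fᵀx ≥ 0 for all x ∈ K}`. -/
def dualConeSet {m : ℕ} (K : Set (EucSp m)) : Set (EucSp m) :=
  {f | ∀ x ∈ K, 0 ≤ ⟪f, x⟫}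

/-- `ν` is cone linear with respect to `K`: `ν = ⟪f, ·⟫` on `K` for some `f ∈ K*`. -/
def IsConeLinear {m : ℕ} (K : Set (EucSp m)) (ν : EucSp m → ℝ) : Prop :=
  ∃ f ∈ dualConeSet K, ∀ x ∈ K, ν x = ⟪f, x⟫

/-- The matrix norm induced by a norm `ν` on `ℝ^m`. -/
def inducedNormFn {m : ℕ} (ν : EucSp m → ℝ) (A : Matrix (Fin m) (Fin m) ℝ) : ℝ :=
  sSup {c : ℝ | ∃ x : EucSp m, x ≠ 0 ∧ c = ν (Matrix.toEuclideanLin A x) / ν x}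

/-!
The operator norm is multiplicative on Kronecker products: in orthonormal bases `A ⊗ B` is the
matrix of the tensor product of two operators, and testing it on pure tensors, where
`‖x ⊗ y‖ = ‖x‖ ‖y‖`, gives `‖A‖ ‖B‖ ≤ ‖A ⊗ B‖`. Hence `A ↦ A^{⊗m}` is a monoid homomorphism with
`‖A^{⊗m}‖ = ‖A‖ ^ m`, and `E ‖A_k^{⊗m} ⋯ A_1^{⊗m}‖ ^ p = E ‖A_k ⋯ A_1‖ ^ (m p)` for every `k`.
After taking `1 / (p k)`-th roots, the upper limit commutes with the `m`-th power because
submultiplicativity bounds `(E ‖A_k ⋯ A_1‖ ^ (m p)) ^ (1 / (m p k))` by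
`(E ‖A_1‖ ^ (m p)) ^ (1 / (m p))`.
-/

section TensorNorm

open scoped TensorProduct

variable {𝕜 E F G H : Type*} [RCLike 𝕜]
  [NormedAddCommGroup E] [InnerProductSpace 𝕜 E] [NormedAddCommGroup F] [InnerProductSpace 𝕜 F]
  [NormedAddCommGroup G] [InnerProductSpace 𝕜 G] [NormedAddCommGroup H] [InnerProductSpace 𝕜 H]

theorem opNorm_mul_opNorm_le_of_bound (f : E →L[𝕜] F) (g : G →L[𝕜] H) {C : ℝ} (hC : 0 ≤ C)
    (h : ∀ x y, ‖f x‖ * ‖g y‖ ≤ C * (‖x‖ * ‖y‖)) : ‖f‖ * ‖g‖ ≤ C := by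
  have hf (y : G) : ‖f‖ * ‖g y‖ ≤ C * ‖y‖ := by
    have : ‖(‖g y‖ : 𝕜) • f‖ ≤ C * ‖y‖ :=
      ContinuousLinearMap.opNorm_le_bound _ (by positivity) fun x => by
        simpa [norm_smul, mul_comm, mul_left_comm] using h x y
    simpa [norm_smul, mul_comm] using this
  have : ‖(‖f‖ : 𝕜) • g‖ ≤ C :=
    ContinuousLinearMap.opNorm_le_bound _ hC fun y => by simpa [norm_smul] using hf y
  simpa [norm_smul] using this

theorem norm_tensorProduct_mapL (f : E →L[𝕜] F) (g : G →L[𝕜] H) :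
    ‖TensorProduct.mapL f g‖ = ‖f‖ * ‖g‖ := by
  refine le_antisymm (TensorProduct.norm_mapL_le f g)
    (opNorm_mul_opNorm_le_of_bound f g (norm_nonneg _) fun x y => ?_)
  simpa only [TensorProduct.mapL_tmul, TensorProduct.norm_tmul] using
    (TensorProduct.mapL f g).le_opNorm (x ⊗ₜ y)

end TensorNorm

section L2OperatorNorm

open scoped Matrix.Norms.L2Operator Kronecker

variable {𝕜 ι ι' κ κ' : Type*} [RCLike 𝕜] [Fintype ι] [Fintype ι'] [Fintype κ] [Fintype κ']
  [DecidableEq κ]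

theorem norm_toLin_orthonormalBasis {E F : Type*} [NormedAddCommGroup E] [InnerProductSpace 𝕜 E]
    [NormedAddCommGroup F] [InnerProductSpace 𝕜 F] [FiniteDimensional 𝕜 E]
    (b : OrthonormalBasis κ 𝕜 E) (c : OrthonormalBasis ι 𝕜 F) (A : Matrix ι κ 𝕜) :
    ‖(Matrix.toLin b.toBasis c.toBasis A).toContinuousLinearMap‖ = ‖A‖ := by
  have h : (Matrix.toLin b.toBasis c.toBasis A).toContinuousLinearMap =
      (c.repr.symm : EuclideanSpace 𝕜 ι →L[𝕜] F) ∘L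
        (Matrix.toEuclideanLin A).toContinuousLinearMap ∘L
        (b.repr : E →L[𝕜] EuclideanSpace 𝕜 κ) := by
    ext x
    simp only [LinearMap.coe_toContinuousLinearMap', Matrix.toLin_apply,
      OrthonormalBasis.coe_toBasis, ContinuousLinearMap.comp_apply, ContinuousLinearEquiv.coe_coe,
      LinearIsometryEquiv.coe_toContinuousLinearEquiv,
      LinearIsometryEquiv.toContinuousLinearEquiv_symm,
      LinearIsometryEquiv.coe_symm_toContinuousLinearEquiv,
      ← OrthonormalBasis.sum_repr_symm]
    rfl
  rw [h, ContinuousLinearMap.opNorm_linearIsometryEquiv_comp,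
    ContinuousLinearMap.opNorm_comp_linearIsometryEquiv]
  rfl

variable [DecidableEq κ']

theorem l2_opNorm_reindex (e : ι ≃ ι') (e' : κ ≃ κ') (A : Matrix ι κ 𝕜) :
    ‖Matrix.reindex e e' A‖ = ‖A‖ := by
  rw [← norm_toLin_orthonormalBasis (EuclideanSpace.basisFun κ 𝕜) (EuclideanSpace.basisFun ι 𝕜) A,
     ← norm_toLin_orthonormalBasis ((EuclideanSpace.basisFun κ 𝕜).reindex e')
      ((EuclideanSpace.basisFun ι 𝕜).reindex e)]
  congr 2
  rw [OrthonormalBasis.reindex_toBasis, OrthonormalBasis.reindex_toBasis]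
  refine (EuclideanSpace.basisFun κ 𝕜).toBasis.ext fun j => ?_
  conv_lhs => rw [← e'.symm_apply_apply j, ← Module.Basis.reindex_apply, Matrix.toLin_self]
  rw [Matrix.toLin_self, ← e.sum_comp]
  simp

theorem l2_opNorm_kronecker (A : Matrix ι κ 𝕜) (B : Matrix ι' κ' 𝕜) :
    ‖A ⊗ₖ B‖ = ‖A‖ * ‖B‖ := by
  let b := EuclideanSpace.basisFun κ 𝕜
  let b' := EuclideanSpace.basisFun κ' 𝕜
  let c := EuclideanSpace.basisFun ι 𝕜
  let c' := EuclideanSpace.basisFun ι' 𝕜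
  rw [← norm_toLin_orthonormalBasis (b.tensorProduct b') (c.tensorProduct c'),
    ← norm_toLin_orthonormalBasis b c, ← norm_toLin_orthonormalBasis b' c',
    ← norm_tensorProduct_mapL]
  congr 1
  rw [OrthonormalBasis.toBasis_tensorProduct, OrthonormalBasis.toBasis_tensorProduct,
    Matrix.toLin_kronecker]
  ext x
  simp

end L2OperatorNorm

section OpNorm

open scoped Matrix.Norms.L2Operator

variable {n : ℕ}

theorem opNorm_eq_l2_opNorm (A : Mat n) : opNorm A = ‖A‖ := rfl

theorem opNorm_nonneg (A : Mat n) : 0 ≤ opNorm A := norm_nonneg _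

theorem opNorm_one_le : opNorm (1 : Mat n) ≤ 1 := by
  rw [opNorm_eq_l2_opNorm, Matrix.cstar_norm_def, map_one]
  exact ContinuousLinearMap.norm_id_le

theorem opNorm_mul_le (A B : Mat n) : opNorm (A * B) ≤ opNorm A * opNorm B :=
  Matrix.l2_opNorm_mul A B

theorem continuous_opNorm : Continuous (opNorm : Mat n → ℝ) :=
  (continuous_norm : Continuous fun A : Mat n => ‖A‖)

theorem opNorm_kronPow (A : Mat n) (m : ℕ) : opNorm (kronPow A m) = opNorm A ^ m := by
  simp only [opNorm_eq_l2_opNorm]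
  induction m with
  | zero =>
    have : Nonempty (Fin (n ^ 0)) := ⟨⟨0, by simp⟩⟩
    rw [kronPow, pow_zero]
    exact CStarRing.norm_one
  | succ m ih => rw [kronPow, l2_opNorm_reindex, pow_succ, ← ih, l2_opNorm_kronecker]

theorem msupport_eq_support (μ : Measure (Mat n)) : msupport μ = μ.support := by
  ext A
  simp only [Metric.nhds_basis_ball.mem_measureSupport, pos_iff_ne_zero, Metric.ball, dist_eq_norm]
  exact Iff.rfl

end OpNorm

section KronPow

variable {n : ℕ}

theorem kronPow_one (m : ℕ) : kronPow (1 : Mat n) m = 1 := by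
  induction m with
  | zero => rfl
  | succ m ih =>
    rw [kronPow, ih, Matrix.one_kronecker_one, Matrix.reindex_apply, Matrix.submatrix_one_equiv]

theorem kronPow_mul (A B : Mat n) (m : ℕ) :
    kronPow (A * B) m = kronPow A m * kronPow B m := by
  induction m with
  | zero => exact (Matrix.one_mul _).symm
  | succ m ih =>
    simp only [kronPow, ih, Matrix.mul_kronecker_mul, Matrix.reindex_apply,
      Matrix.submatrix_mul_equiv]

/-- The `m`-th Kronecker power as a homomorphism of multiplicative monoids. -/
def kronPowHom (n m : ℕ) : Mat n →* Mat (n ^ m) where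
  toFun A := kronPow A m
  map_one' := kronPow_one m
  map_mul' A B := kronPow_mul A B m

theorem continuous_kronPow (n m : ℕ) : Continuous fun A : Mat n => kronPow A m := by
  induction m with
  | zero => exact continuous_const
  | succ m ih =>
    exact continuous_matrix fun i j => (ih.matrix_elem _ _).mul (continuous_id.matrix_elem _ _)

end KronPow

section ProdRev

variable {n l k : ℕ}

theorem prodRev_succ (f : Fin (k + 1) → Mat n) :
    prodRev f = prodRev (fun i => f i.succ) * f 0 := by
  simp [prodRev, List.ofFn_succ]

theorem prodRev_map (φ : Mat n →* Mat l) (f : Fin k → Mat n) :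
    prodRev (fun i => φ (f i)) = φ (prodRev f) := by
  rw [prodRev, prodRev, map_list_prod, List.map_reverse, List.map_ofFn]
  rfl

theorem opNorm_prodRev_le (f : Fin k → Mat n) : opNorm (prodRev f) ≤ ∏ i, opNorm (f i) := by
  induction k with
  | zero => exact opNorm_one_le
  | succ k ih =>
    rw [prodRev_succ, Fin.prod_univ_succ, mul_comm (opNorm (f 0))]
    exact (opNorm_mul_le _ _).trans (mul_le_mul_of_nonneg_right (ih _) (opNorm_nonneg _))

theorem continuous_prodRev : Continuous (prodRev : (Fin k → Mat n) → Mat n) := by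
  induction k with
  | zero => exact continuous_const
  | succ k ih =>
    simp only [funext prodRev_succ]
    fun_prop

end ProdRev

section KExpNorm

variable {n l : ℕ}

instance matBorelSpace (n : ℕ) : BorelSpace (Mat n) :=
  inferInstanceAs (BorelSpace (Fin n → Fin n → ℝ))

instance matSecondCountableTopology (n : ℕ) : SecondCountableTopology (Mat n) :=
  inferInstanceAs (SecondCountableTopology (Fin n → Fin n → ℝ))

theorem kExpNorm_nonneg (μ : Measure (Mat n)) (q k : ℕ) : 0 ≤ kExpNorm μ q k :=
  integral_nonneg fun _ => pow_nonneg (opNorm_nonneg _) _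

theorem kExpNorm_le_pow {μ : Measure (Mat n)} [SigmaFinite μ] {q : ℕ}
    (hμ : Integrable (fun A => opNorm A ^ q) μ) (k : ℕ) :
    kExpNorm μ q k ≤ (∫ A, opNorm A ^ q ∂μ) ^ k := by
  calc kExpNorm μ q k
      ≤ ∫ f : Fin k → Mat n, ∏ i, opNorm (f i) ^ q ∂Measure.pi fun _ => μ := by
        refine integral_mono_of_nonneg (.of_forall fun f => pow_nonneg (opNorm_nonneg _) _)
          (.fintype_prod fun _ => hμ) (.of_forall fun f => ?_)
        simp only [Finset.prod_pow]
        exact pow_le_pow_left₀ (opNorm_nonneg _) (opNorm_prodRev_le f) q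
    _ = (∫ A, opNorm A ^ q ∂μ) ^ k := by
        rw [integral_fintype_prod_eq_pow (fun A => opNorm A ^ q), Fintype.card_fin]

theorem isBoundedUnder_kExpNorm_rpow {μ : Measure (Mat n)} [SigmaFinite μ] {q : ℕ}
    (hμ : Integrable (fun A => opNorm A ^ q) μ) :
    IsBoundedUnder (· ≤ ·) atTop fun k : ℕ => kExpNorm μ q k ^ (1 / (q * k : ℝ)) := by
  refine isBoundedUnder_of_eventually_le (a := (∫ A, opNorm A ^ q ∂μ) ^ (1 / q : ℝ)) ?_
  filter_upwards [eventually_ne_atTop 0] with k hk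
  have hM : 0 ≤ ∫ A, opNorm A ^ q ∂μ := integral_nonneg fun A => pow_nonneg (opNorm_nonneg A) q
  calc kExpNorm μ q k ^ (1 / (q * k : ℝ))
      ≤ ((∫ A, opNorm A ^ q ∂μ) ^ k) ^ (1 / (q * k : ℝ)) :=
        Real.rpow_le_rpow (kExpNorm_nonneg μ q k) (kExpNorm_le_pow hμ k) (by positivity)
    _ = (∫ A, opNorm A ^ q ∂μ) ^ (1 / q : ℝ) := by
        rw [← Real.rpow_natCast_mul hM]
        congr 1
        field_simp

theorem kExpNorm_map {μ : Measure (Mat n)} [IsFiniteMeasure μ] {φ : Mat n →* Mat l} {m : ℕ}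
    (hφ : Measurable φ) (hnorm : ∀ A, opNorm (φ A) = opNorm A ^ m) (p k : ℕ) :
    kExpNorm (μ.map φ) p k = kExpNorm μ (m * p) k := by
  have hcont : Continuous fun f : Fin k → Mat l => opNorm (prodRev f) ^ p :=
    (continuous_opNorm.comp continuous_prodRev).pow p
  have hpi : Measurable fun (f : Fin k → Mat n) i => φ (f i) :=
    measurable_pi_lambda _ fun i => hφ.comp (measurable_pi_apply i)
  rw [kExpNorm, kExpNorm, ← Measure.pi_map_pi fun _ => hφ.aemeasurable,
    integral_map hpi.aemeasurable hcont.aestronglyMeasurable]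
  simp only [prodRev_map, hnorm, pow_mul]

end KExpNorm

section PRadius

variable {n l : ℕ}

theorem limsup_pow_of_nonneg {ι : Type*} {f : Filter ι} [f.NeBot] {u : ι → ℝ}
    (hu : ∀ i, 0 ≤ u i) (hb : f.IsBoundedUnder (· ≤ ·) u) (m : ℕ) :
    limsup (fun i => u i ^ m) f = limsup u f ^ m := by
  have hcob : f.IsCoboundedUnder (· ≤ ·) u := .of_frequently_ge (a := 0) (.of_forall hu)
  have h0 : 0 ≤ limsup u f := le_limsup_of_frequently_le (.of_forall hu) hb
  -- `x ↦ x ^ m` is monotone only on `[0, ∞)`, hence the truncation.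
  have hmono : Monotone fun x : ℝ => max x 0 ^ m := fun x y hxy =>
    pow_le_pow_left₀ (le_max_right _ _) (max_le_max_right 0 hxy) m
  have hcont : Continuous fun x : ℝ => max x 0 ^ m := by fun_prop
  have h := hmono.map_limsup_of_continuousAt u hcont.continuousAt hb hcob
  simpa only [Function.comp_def, max_eq_left h0, max_eq_left (hu _)] using h.symm

theorem pRadius_map {μ : Measure (Mat n)} [IsFiniteMeasure μ] {φ : Mat n →* Mat l} {m p : ℕ}
    (hφ : Measurable φ) (hnorm : ∀ A, opNorm (φ A) = opNorm A ^ m) (hm : m ≠ 0)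
    (hμ : Integrable (fun A => opNorm A ^ (m * p)) μ) :
    pRadius (μ.map φ) p = pRadius μ (m * p) ^ m := by
  have hroot (k : ℕ) : kExpNorm (μ.map φ) p k ^ (1 / (p * k : ℝ)) =
      (kExpNorm μ (m * p) k ^ (1 / ((m * p : ℕ) * k : ℝ))) ^ m := by
    rw [kExpNorm_map hφ hnorm, ← Real.rpow_mul_natCast (kExpNorm_nonneg μ (m * p) k)]
    congr 1
    push_cast
    field_simp
  simp only [pRadius, hroot]
  exact limsup_pow_of_nonneg (fun k => Real.rpow_nonneg (kExpNorm_nonneg μ (m * p) k) _)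
    (isBoundedUnder_kExpNorm_rpow hμ) m

theorem memLp_opNorm_of_hasBoundedSupport {μ : Measure (Mat n)} [IsFiniteMeasure μ]
    (hμ : HasBoundedSupport μ) (q : ℝ≥0∞) : MemLp (opNorm : Mat n → ℝ) q μ := by
  obtain ⟨C, hC⟩ := hμ
  rw [msupport_eq_support] at hC
  refine MemLp.of_bound continuous_opNorm.aestronglyMeasurable C ?_
  filter_upwards [Measure.support_mem_ae] with A hA
  rw [Real.norm_of_nonneg (opNorm_nonneg A)]
  exact hC A hA

theorem stmt13_general {n m p : ℕ} {μ : Measure (Mat n)} [IsFiniteMeasure μ]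
    (hm : 0 < m) (hp : 0 < p) (hμ : MemLp (opNorm : Mat n → ℝ) (m * p : ℕ) μ) :
    pRadius (μ.map fun A => kronPow A m) p = pRadius μ (m * p) ^ m := by
  have hint : Integrable (fun A => opNorm A ^ (m * p)) μ := by
    simpa only [Real.norm_of_nonneg (opNorm_nonneg _)] using
      hμ.integrable_norm_pow (Nat.mul_pos hm hp).ne'
  exact pRadius_map (φ := kronPowHom n m) (continuous_kronPow n m).measurable
    (opNorm_kronPow · m) hm.ne' hint

end PRadius

/-- For a Borel probability measure with bounded support,
`ρ_{p, μ^{⊗m}} = (ρ_{mp, μ})^m` for all positive integers `p`, `m`, where `μ^{⊗m}` is the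
pushforward of `μ` under the `m`-th Kronecker power map. -/
theorem stmt13 (n : ℕ) (hn : 1 ≤ n) (μ : Measure (Mat n)) [IsProbabilityMeasure μ]
    (hbdd : HasBoundedSupport μ) (p m : ℕ) (hp : 0 < p) (hm : 0 < m) :
    pRadius (μ.map fun A => kronPow A m) p = pRadius μ (m * p) ^ m := by
  exact stmt13_general hm hp (memLp_opNorm_of_hasBoundedSupport hbdd _)

end
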